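/- Let n ≥ 2, θ > 0, and let X_1,…,X_n be i.i.d. Uniform[0,θ] random variables. Then the expectation of the mean/max statistic satisfies E[τ_n] = (n+1)/(2n), where τ_n = X̄_n / X_(n). -/

import Mathlib

open MeasureTheory ProbabilityTheory

/-- The uniform probability measure on `[0, θ]`. -/
noncomputable def uniformMeasure (θ : ℝ) : Measure ℝ :=
  ENNReal.ofReal θ⁻¹ • volume.restrict (Set.Icc 0 θ)

/-- The joint law of an i.i.d. sample of size `n` from `Uniform[0, θ]`. -/
noncomputable def iidUniform (n : ℕ) (θ : ℝ) : Measure (Fin n → ℝ) :=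
  Measure.pi fun _ => uniformMeasure θ

/-- Sample maximum. -/
noncomputable def sampleMax {n : ℕ} (x : Fin n → ℝ) : ℝ := ⨆ i, x i

/-- Empirical mean. -/
noncomputable def sampleMean {n : ℕ} (x : Fin n → ℝ) : ℝ := (∑ i, x i) / n

/-- The mean/max statistic `τ_n`. -/
noncomputable def tau {n : ℕ} (x : Fin n → ℝ) : ℝ := sampleMean x / sampleMax x

/-!
On the positive orthant `sampleMax` is the sup norm, and `tau` is invariant under positive
scaling. In polar coordinates a Haar measure is a product of a measure on the unit sphere and
`r ^ (n - 1) dr`, so under the uniform law on `[0, θ] ^ n` the statistic `tau` is independent of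
`sampleMax`. Hence `E[mean] = E[tau * max] = E[tau] * E[max]`, that is
`θ / 2 = E[tau] * (n / (n + 1) * θ)`.
-/

open Metric Set

section PolarCoordinates

variable {E F : Type*} [NormedAddCommGroup E] [NormedSpace ℝ E] [FiniteDimensional ℝ E]
  [MeasurableSpace E] [BorelSpace E] [NormedAddCommGroup F] [NormedSpace ℝ F]
  (μ : Measure E) [μ.IsAddHaarMeasure] {f : E → ℝ}

local notation "dim" => Module.finrank ℝ

theorem integral_smul_fun_norm_addHaar [Nontrivial E]
    (hf : ∀ t : ℝ, 0 < t → ∀ x, f (t • x) = f x) (φ : ℝ → F) :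
    ∫ x, f x • φ ‖x‖ ∂μ =
      (∫ u, f u ∂μ.toSphere) • ∫ r in Ioi (0 : ℝ), r ^ (dim E - 1) • φ r :=
  calc
    ∫ x, f x • φ ‖x‖ ∂μ
      = ∫ x : ({0}ᶜ : Set E), f x • φ ‖x.1‖ ∂(μ.comap (↑)) := by
        rw [integral_subtype_comap (measurableSet_singleton _).compl fun x ↦ f x • φ ‖x‖,
          restrict_compl_singleton]
    _ = ∫ p, f p.1 • φ p.2 ∂μ.toSphere.prod (.volumeIoiPow (dim E - 1)) := by
        rw [← μ.measurePreserving_homeomorphUnitSphereProd.integral_comp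
          (Homeomorph.measurableEmbedding _)]
        refine integral_congr_ae (.of_forall fun x ↦ ?_)
        have hx : 0 < ‖x.1‖ := norm_pos_iff.2 x.2
        simp [hf _ (inv_pos.2 hx)]
    _ = (∫ u, f u ∂μ.toSphere) • ∫ r : Ioi (0 : ℝ), φ r ∂.volumeIoiPow (dim E - 1) :=
        integral_prod_smul (fun u : sphere (0 : E) 1 ↦ f u) fun r : Ioi (0 : ℝ) ↦ φ r
    _ = (∫ u, f u ∂μ.toSphere) • ∫ r in Ioi (0 : ℝ), r ^ (dim E - 1) • φ r := by
        congr 1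
        simp only [Measure.volumeIoiPow, ENNReal.ofReal]
        rw [integral_withDensity_eq_integral_smul
            (measurable_subtype_coe.pow_const _).real_toNNReal,
          integral_subtype_comap measurableSet_Ioi fun r ↦ Real.toNNReal (r ^ (dim E - 1)) • φ r]
        refine setIntegral_congr_fun measurableSet_Ioi fun r hr ↦ ?_
        simp only [NNReal.smul_def, Real.coe_toNNReal _ (pow_nonneg (le_of_lt hr) _)]

theorem setIntegral_closedBall_mul_norm_pow [Nontrivial E]
    (hf : ∀ t : ℝ, 0 < t → ∀ x, f (t • x) = f x) {R : ℝ} (hR : 0 ≤ R) (k : ℕ) :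
    ∫ x in closedBall 0 R, f x * ‖x‖ ^ k ∂μ =
      (∫ u, f u ∂μ.toSphere) * (R ^ (dim E + k) / (dim E + k)) := by
  have hdim : dim E - 1 + k + 1 = dim E + k := by
    have : 0 < dim E := Module.finrank_pos
    omega
  calc
    ∫ x in closedBall 0 R, f x * ‖x‖ ^ k ∂μ
      = ∫ x, f x • (Iic R).indicator (· ^ k) ‖x‖ ∂μ := by
        rw [← integral_indicator measurableSet_closedBall]
        simp only [indicator, mem_closedBall_zero_iff, mem_Iic, smul_eq_mul, mul_ite,
          mul_zero]
    _ = (∫ u, f u ∂μ.toSphere) *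
          ∫ r in Ioi 0, (Iic R).indicator (fun r ↦ r ^ (dim E - 1 + k)) r := by
        rw [integral_smul_fun_norm_addHaar μ hf, smul_eq_mul]
        simp only [smul_eq_mul, indicator_apply, mul_ite, mul_zero, pow_add]
    _ = (∫ u, f u ∂μ.toSphere) * ∫ r in 0..R, r ^ (dim E - 1 + k) := by
        rw [setIntegral_indicator measurableSet_Iic, Ioi_inter_Iic,
          intervalIntegral.integral_of_le hR]
    _ = (∫ u, f u ∂μ.toSphere) * (R ^ (dim E + k) / (dim E + k)) := by
        rw [integral_pow, ← Nat.cast_add_one, hdim, zero_pow (by omega), sub_zero, Nat.cast_add]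

theorem setIntegral_closedBall_mul_norm
    (hf : ∀ t : ℝ, 0 < t → ∀ x, f (t • x) = f x) {R : ℝ} (hR : 0 ≤ R) :
    ∫ x in closedBall 0 R, f x * ‖x‖ ∂μ =
      dim E / (dim E + 1) * R * ∫ x in closedBall 0 R, f x ∂μ := by
  rcases subsingleton_or_nontrivial E with hE | hE
  · simp [Subsingleton.elim _ (0 : E), Module.finrank_zero_of_subsingleton]
  have hdim : (dim E : ℝ) ≠ 0 := Nat.cast_ne_zero.2 Module.finrank_pos.ne'
  have h₀ := setIntegral_closedBall_mul_norm_pow μ hf hR 0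
  have h₁ := setIntegral_closedBall_mul_norm_pow μ hf hR 1
  simp only [pow_zero, mul_one, pow_one, Nat.cast_zero, Nat.cast_one, add_zero] at h₀ h₁
  rw [h₀, h₁]
  field_simp
  ring

theorem setIntegral_closedBall_inter_mul_norm {C : Set E} (hC : MeasurableSet C)
    (hCsmul : ∀ t : ℝ, 0 < t → ∀ x ∈ C, t • x ∈ C)
    (hf : ∀ t : ℝ, 0 < t → ∀ x ∈ C, f (t • x) = f x) {R : ℝ} (hR : 0 ≤ R) :
    ∫ x in closedBall 0 R ∩ C, f x * ‖x‖ ∂μ =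
      dim E / (dim E + 1) * R * ∫ x in closedBall 0 R ∩ C, f x ∂μ := by
  have hind : ∀ t : ℝ, 0 < t → ∀ x, C.indicator f (t • x) = C.indicator f x := by
    intro t ht x
    by_cases hx : x ∈ C
    · rw [indicator_of_mem hx, indicator_of_mem (hCsmul t ht x hx), hf t ht x hx]
    · have htx : t • x ∉ C := fun h ↦
        hx (by simpa only [inv_smul_smul₀ ht.ne'] using hCsmul t⁻¹ (inv_pos.2 ht) _ h)
      rw [indicator_of_notMem hx, indicator_of_notMem htx]
  simpa only [← indicator_mul_left, setIntegral_indicator hC]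
    using setIntegral_closedBall_mul_norm μ hind hR

end PolarCoordinates

theorem closedBall_zero_inter_Ici_zero {ι : Type*} [Fintype ι] {r : ℝ} (hr : 0 ≤ r) :
    closedBall (0 : ι → ℝ) r ∩ Ici 0 = Icc 0 fun _ ↦ r := by
  ext x
  simp only [mem_inter_iff, mem_closedBall_zero_iff, pi_norm_le_iff_of_nonneg hr, mem_Ici,
    mem_Icc, and_comm (a := 0 ≤ x)]
  refine and_congr_left fun hx ↦ forall_congr' fun i ↦ ?_
  rw [Real.norm_of_nonneg (hx i)]

section SampleStatistics

variable {n : ℕ} {x : Fin n → ℝ}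

theorem sampleMax_eq_norm (hx : 0 ≤ x) : sampleMax x = ‖x‖ := by
  refine le_antisymm (Real.iSup_le (fun i ↦ (le_abs_self _).trans (norm_le_pi_norm x i))
    (norm_nonneg x)) ((pi_norm_le_iff_of_nonneg (Real.iSup_nonneg hx)).2 fun i ↦ ?_)
  rw [Real.norm_of_nonneg (hx i)]
  exact le_ciSup (finite_range x).bddAbove i

theorem tau_smul {t : ℝ} (ht : 0 < t) (x : Fin n → ℝ) : tau (t • x) = tau x := by
  simp only [tau, sampleMean, sampleMax, Pi.smul_apply, smul_eq_mul]
  rw [← Finset.mul_sum, ← Real.mul_iSup_of_nonneg ht.le, mul_div_assoc,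
    mul_div_mul_left _ _ ht.ne']

theorem tau_mul_sampleMax (hx : 0 ≤ x) : tau x * sampleMax x = sampleMean x := by
  refine div_mul_cancel_of_imp fun hmax ↦ ?_
  have hx₀ : x = 0 := norm_eq_zero.1 (sampleMax_eq_norm hx ▸ hmax)
  simp [hx₀, sampleMean]

theorem integral_sampleMean_pi [NeZero n] {μ : Measure ℝ} [IsProbabilityMeasure μ]
    (hμ : Integrable id μ) :
    ∫ x : Fin n → ℝ, sampleMean x ∂Measure.pi (fun _ ↦ μ) = ∫ y, y ∂μ := by
  have hn : (n : ℝ) ≠ 0 := NeZero.ne _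
  have hint (i : Fin n) : Integrable (fun x ↦ x i) (Measure.pi fun _ : Fin n ↦ μ) :=
    integrable_eval hμ
  simp only [sampleMean]
  rw [integral_div, integral_finsetSum _ fun i _ ↦ hint i]
  simp [integral_eval, hn]

end SampleStatistics

section Uniform

variable {n : ℕ} {θ : ℝ}

theorem isProbabilityMeasure_uniformMeasure (hθ : 0 < θ) :
    IsProbabilityMeasure (uniformMeasure θ) :=
  ⟨by simp [uniformMeasure, ← ENNReal.ofReal_mul (inv_pos.2 hθ).le, hθ.ne']⟩

theorem integrable_id_uniformMeasure (θ : ℝ) : Integrable id (uniformMeasure θ) :=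
  Integrable.smul_measure (μ := volume.restrict (Icc 0 θ)) continuous_id.integrableOn_Icc
    ENNReal.ofReal_ne_top

theorem integral_id_uniformMeasure (hθ : 0 < θ) : ∫ y, y ∂uniformMeasure θ = θ / 2 := by
  rw [uniformMeasure, integral_smul_measure, ENNReal.toReal_ofReal (inv_pos.2 hθ).le,
    integral_Icc_eq_integral_Ioc, ← intervalIntegral.integral_of_le hθ.le, integral_id,
    smul_eq_mul]
  field_simp
  ring

theorem iidUniform_eq_smul_restrict_Icc (n : ℕ) (θ : ℝ) :
    iidUniform n θ =
      ENNReal.ofReal θ⁻¹ ^ n • volume.restrict (Icc (0 : Fin n → ℝ) fun _ ↦ θ) := by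
  have : IsFiniteMeasure (uniformMeasure θ) := Measure.smul_finite _ ENNReal.ofReal_ne_top
  rw [iidUniform, ← pi_univ_Icc, volume_pi, Measure.restrict_pi_pi]
  refine Measure.pi_eq fun s _ ↦ ?_
  simp [uniformMeasure, Finset.prod_mul_distrib]

theorem ae_nonneg_iidUniform (n : ℕ) (θ : ℝ) : ∀ᵐ x ∂iidUniform n θ, 0 ≤ x := by
  rw [iidUniform_eq_smul_restrict_Icc]
  exact Measure.ae_smul_measure
    ((ae_restrict_mem measurableSet_Icc).mono fun _ hx ↦ hx.1) _

theorem integral_mul_sampleMax_iidUniform {f : (Fin n → ℝ) → ℝ}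
    (hf : ∀ t : ℝ, 0 < t → ∀ x, f (t • x) = f x) (hθ : 0 ≤ θ) :
    ∫ x, f x * sampleMax x ∂iidUniform n θ =
      n / (n + 1) * θ * ∫ x, f x ∂iidUniform n θ := by
  have hcube := setIntegral_closedBall_inter_mul_norm volume measurableSet_Ici
    (fun t ht x hx ↦ smul_nonneg ht.le hx) (fun t ht x _ ↦ hf t ht x) hθ
  rw [closedBall_zero_inter_Ici_zero hθ, Module.finrank_fin_fun] at hcube
  rw [integral_congr_ae ((ae_nonneg_iidUniform n θ).mono fun x hx ↦
      congrArg (f x * ·) (sampleMax_eq_norm hx)),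
    iidUniform_eq_smul_restrict_Icc, integral_smul_measure, integral_smul_measure, hcube,
    mul_smul_comm]

end Uniform

/-- Under an i.i.d. `Uniform[0,θ]` sample, `E[τ_n] = (n+1)/(2n)`. -/
theorem tau_expectation_uniform
    (n : ℕ) (hn : 2 ≤ n) (θ : ℝ) (hθ : 0 < θ) :
    ∫ x, tau x ∂iidUniform n θ = ((n : ℝ) + 1) / (2 * n) := by
  have : NeZero n := ⟨by omega⟩
  have : IsProbabilityMeasure (uniformMeasure θ) := isProbabilityMeasure_uniformMeasure hθ
  have hn₀ : (n : ℝ) ≠ 0 := NeZero.ne _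
  have hmean : n / (n + 1) * θ * ∫ x, tau x ∂iidUniform n θ = θ / 2 :=
    calc
      n / (n + 1) * θ * ∫ x, tau x ∂iidUniform n θ
        = ∫ x, tau x * sampleMax x ∂iidUniform n θ :=
          (integral_mul_sampleMax_iidUniform (fun _ ↦ tau_smul) hθ.le).symm
      _ = ∫ x, sampleMean x ∂iidUniform n θ :=
          integral_congr_ae ((ae_nonneg_iidUniform n θ).mono fun _ ↦ tau_mul_sampleMax)
      _ = ∫ y, y ∂uniformMeasure θ := integral_sampleMean_pi (integrable_id_uniformMeasure θ)
      _ = θ / 2 := integral_id_uniformMeasure hθ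
  field_simp at hmean ⊢
  linarith
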